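/- Let g : ℤ → ℝ be bounded and let E ∈ ℝ satisfy δ(g) > 𝓛(E). Then E is not an eigenvalue of H_g: every u ∈ ℓ²(ℤ) satisfying u(n+1) + u(n−1) + g(n)u(n) = E·u(n) for all n ∈ ℤ is identically zero. -/

import Mathlib

noncomputable section

open Filter Real

def distToInt (x : ℝ) : ℝ := |x - round x|

def IsDiophantine (α : ℝ) : Prop :=
  ∃ κ τ : ℝ, 0 < κ ∧ 0 < τ ∧ ∀ k : ℤ, k ≠ 0 → τ / |(k : ℝ)| ^ κ ≤ distToInt (k * α)

def deltaPhase (α θ : ℝ) : ℝ :=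
  limsup (fun n : ℤ => -Real.log (distToInt (2 * θ + n * α)) / |(n : ℝ)|) cofinite

def amoPot (lam α θ : ℝ) : ℤ → ℝ := fun n => 2 * lam * Real.cos (2 * Real.pi * (θ + n * α))

def IsEigenfunction (g : ℤ → ℝ) (E : ℝ) (φ : ℤ → ℝ) : Prop :=
  ∀ n : ℤ, φ (n + 1) + φ (n - 1) + g n * φ n = E * φ n

def deltaPot (g : ℤ → ℝ) : ℝ :=
  limsup (fun n : ℤ => -Real.log (⨆ m : ℤ, |g (n - m) - g m|) / |(n : ℝ)|) cofinite

def matNorm (M : Matrix (Fin 2) (Fin 2) ℝ) : ℝ := ⨆ p : Fin 2 × Fin 2, |M p.1 p.2|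

def transfer (g : ℤ → ℝ) (E : ℝ) : ℕ → ℤ → Matrix (Fin 2) (Fin 2) ℝ
  | 0, _ => 1
  | n + 1, k => !![E - g (k + n), -1; 1, 0] * transfer g E n k

def LyapSup (g : ℤ → ℝ) (E : ℝ) : ℝ :=
  limsup (fun n : ℕ => ⨆ k : ℤ, Real.log (matNorm (transfer g E n k)) / n) atTop

def HasSULE (g : ℤ → ℝ) : Prop :=
  ∃ (Φ : HilbertBasis ℕ ℝ (lp (fun _ : ℤ => ℝ) 2)) (ns : ℕ → ℤ) (γ : ℝ),
    0 < γ ∧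
    (∀ s : ℕ, ∃ E : ℝ, IsEigenfunction g E (fun n => Φ s n)) ∧
    ∀ ε : ℝ, 0 < ε → ∃ C : ℝ,
      ∀ (s : ℕ) (n : ℤ),
        |Φ s n| ≤ C * Real.exp (ε * |(ns s : ℝ)|) * Real.exp (-γ * |(n : ℝ) - (ns s : ℝ)|)

theorem aux_entry (M : Matrix (Fin 2) (Fin 2) ℝ) (i j : Fin 2) : |M i j| ≤ matNorm M :=
  le_ciSup (f := fun p : Fin 2 × Fin 2 => |M p.1 p.2|) (Set.finite_range _).bddAbove (i, j)

theorem aux_matNorm_le (M : Matrix (Fin 2) (Fin 2) ℝ) (B : ℝ) (h : ∀ i j, |M i j| ≤ B) :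
    matNorm M ≤ B := ciSup_le fun p => h p.1 p.2

theorem aux_det (g : ℤ → ℝ) (E : ℝ) (n : ℕ) (k : ℤ) : (transfer g E n k).det = 1 := by
  induction n with
  | zero => simp [transfer]
  | succ n ih => rw [transfer, Matrix.det_mul, ih, Matrix.det_fin_two]; simp

theorem aux_lower (g : ℤ → ℝ) (E : ℝ) (n : ℕ) (k : ℤ) : 1 / 2 ≤ matNorm (transfer g E n k) := by
  have hd := aux_det g E n k
  set T := transfer g E n k
  rw [Matrix.det_fin_two] at hd
  have h00 := aux_entry T 0 0
  have h01 := aux_entry T 0 1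
  have h10 := aux_entry T 1 0
  have h11 := aux_entry T 1 1
  by_contra! h
  have h1 : |T 0 0 * T 1 1| ≤ (1/2) * (1/2) := by
    rw [abs_mul]; exact mul_le_mul (by linarith) (by linarith) (abs_nonneg _) (by norm_num)
  have h2 : |T 0 1 * T 1 0| ≤ (1/2) * (1/2) := by
    rw [abs_mul]; exact mul_le_mul (by linarith) (by linarith) (abs_nonneg _) (by norm_num)
  have := abs_le.1 h1
  have := abs_le.1 h2
  linarith [this.1, this.2]

theorem aux_upper (g : ℤ → ℝ) (E M : ℝ) (hM : ∀ n, |g n| ≤ M) (n : ℕ) (k : ℤ) :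
    matNorm (transfer g E n k) ≤ (|E| + M + 1) ^ n := by
  have hM0 : 0 ≤ M := (abs_nonneg _).trans (hM 0)
  have hE := abs_nonneg E
  apply aux_matNorm_le
  induction n with
  | zero => intro i j; fin_cases i <;> fin_cases j <;> simp [transfer]
  | succ n ih =>
    intro i j
    have hp : 0 ≤ (|E| + M + 1) ^ n := by positivity
    have hg : |E - g (k + n)| ≤ |E| + M := (abs_sub _ _).trans (by linarith [hM (k+n)])
    rw [transfer, Matrix.mul_apply, Fin.sum_univ_two, pow_succ]
    have h0 := ih 0 j
    have h1 := ih 1 j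
    set T := transfer g E n k
    fin_cases i
    · simp only [Fin.zero_eta, Matrix.of_apply, Matrix.cons_val_zero, Matrix.cons_val_one, Matrix.cons_val', Matrix.cons_val_fin_one]
      calc |(E - g (k+n)) * T 0 j + -1 * T 1 j| ≤ |(E - g (k+n)) * T 0 j| + |-1 * T 1 j| := abs_add_le _ _
        _ = |E - g (k+n)| * |T 0 j| + |T 1 j| := by rw [abs_mul]; simp
        _ ≤ (|E| + M) * (|E| + M + 1) ^ n + (|E| + M + 1) ^ n := by
          gcongr
        _ = _ := by ring
    · simp
      nlinarith

theorem aux_log_bdd (g : ℤ → ℝ) (E M : ℝ) (hM : ∀ n, |g n| ≤ M) (n : ℕ) (k : ℤ) :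
    Real.log (matNorm (transfer g E n k)) / n ≤ Real.log (|E| + M + 1) := by
  have hM0 : 0 ≤ M := (abs_nonneg _).trans (hM 0)
  have hE := abs_nonneg E
  have h0 : 0 ≤ Real.log (|E| + M + 1) := Real.log_nonneg (by linarith)
  rcases Nat.eq_zero_or_pos n with rfl | hn
  · simpa using h0
  rw [div_le_iff₀ (by exact_mod_cast hn)]
  have := Real.log_le_log (by linarith [aux_lower g E n k]) (aux_upper g E M hM n k)
  rw [Real.log_pow] at this
  linarith

theorem aux_log_low (g : ℤ → ℝ) (E : ℝ) (n : ℕ) (k : ℤ) :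
    -Real.log 2 / n ≤ Real.log (matNorm (transfer g E n k)) / n := by
  have := Real.log_le_log (by norm_num) (aux_lower g E n k)
  rw [one_div, Real.log_inv] at this
  gcongr

theorem aux_bddk (g : ℤ → ℝ) (E M : ℝ) (hM : ∀ n, |g n| ≤ M) (n : ℕ) :
    BddAbove (Set.range fun k : ℤ => Real.log (matNorm (transfer g E n k)) / n) :=
  ⟨_, by rintro _ ⟨k, rfl⟩; exact aux_log_bdd g E M hM n k⟩

theorem aux_isBdd (g : ℤ → ℝ) (E M : ℝ) (hM : ∀ n, |g n| ≤ M) :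
    IsBoundedUnder (· ≤ ·) atTop
      (fun n : ℕ => ⨆ k : ℤ, Real.log (matNorm (transfer g E n k)) / n) :=
  ⟨Real.log (|E| + M + 1), by
    simp only [eventually_map]
    exact Eventually.of_forall fun n => ciSup_le fun k => aux_log_bdd g E M hM n k⟩

theorem aux_Lnonneg (g : ℤ → ℝ) (E M : ℝ) (hM : ∀ n, |g n| ≤ M) : 0 ≤ LyapSup g E := by
  apply le_of_forall_lt
  intro c hc
  have ht : Tendsto (fun n : ℕ => -Real.log 2 / (n:ℝ)) atTop (nhds 0) :=
    tendsto_const_div_atTop_nhds_zero_nat _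
  obtain ⟨c', h1, h2⟩ := exists_between hc
  refine lt_of_lt_of_le h1 (le_limsup_of_frequently_le ?_ (aux_isBdd g E M hM))
  apply Eventually.frequently
  filter_upwards [ht.eventually (lt_mem_nhds h2)] with n hn
  exact hn.le.trans ((aux_log_low g E n 0).trans (le_ciSup (aux_bddk g E M hM n) 0))

theorem aux_growth (g : ℤ → ℝ) (E M : ℝ) (hM : ∀ n, |g n| ≤ M) (L : ℝ) (hL : LyapSup g E < L) :
    ∃ C : ℝ, 0 ≤ C ∧ ∀ (n : ℕ) (k : ℤ), matNorm (transfer g E n k) ≤ C * Real.exp (L * n) := by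
  have hL0 : 0 < L := (aux_Lnonneg g E M hM).trans_lt hL
  have hM0 : 0 ≤ M := (abs_nonneg _).trans (hM 0)
  have hE := abs_nonneg E
  have hev := eventually_lt_of_limsup_lt hL (aux_isBdd g E M hM)
  obtain ⟨P, hP⟩ := eventually_atTop.1 hev
  have hK : 1 ≤ (|E| + M + 1) ^ (P+1) := one_le_pow₀ (by linarith)
  refine ⟨(|E| + M + 1) ^ (P+1), by linarith, fun n k => ?_⟩
  rcases le_or_gt n P with h | h
  · refine (aux_upper g E M hM n k).trans ?_
    calc (|E| + M + 1) ^ n ≤ (|E| + M + 1) ^ (P+1) := pow_le_pow_right₀ (by linarith) (by omega)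
      _ ≤ _ := le_mul_of_one_le_right (by linarith) (Real.one_le_exp (by positivity))
  · have h1 := (le_ciSup (aux_bddk g E M hM n) k).trans (hP n h.le).le
    have hn : (0:ℝ) < n := by exact_mod_cast (by omega : 0 < n)
    rw [div_le_iff₀ hn] at h1
    have h2 := (Real.log_le_iff_le_exp (by linarith [aux_lower g E n k])).1 h1
    exact h2.trans (le_mul_of_one_le_left (Real.exp_pos _).le hK)

theorem aux_duhamel (g : ℤ → ℝ) (E : ℝ) (k : ℤ) (X F : ℕ → Fin 2 → ℝ) (h0 : X 0 = F 0)
    (hs : ∀ n : ℕ, X (n+1) = Matrix.mulVec !![E - g (k + n), -1; 1, 0] (X n) + F (n+1)) (n : ℕ) :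
    X n = ∑ i ∈ Finset.range (n+1), Matrix.mulVec (transfer g E (n - i) (k + i)) (F i) := by
  induction n with
  | zero => simp [transfer, h0]
  | succ n ih =>
    rw [hs, ih, Finset.sum_range_succ _ (n+1), Matrix.mulVec_sum]
    congr 1
    · apply Finset.sum_congr rfl
      intro i hi
      have hi : i ≤ n := by have := Finset.mem_range.1 hi; omega
      rw [Matrix.mulVec_mulVec]
      have : n + 1 - i = (n - i) + 1 := by omega
      rw [this, transfer]
      have h2 : k + (i:ℤ) + ((n - i : ℕ) : ℤ) = k + n := by omega
      rw [h2]
    · simp [transfer]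

theorem aux_bound (g : ℤ → ℝ) (E : ℝ) (k : ℤ) (X F : ℕ → Fin 2 → ℝ) (h0 : X 0 = F 0)
    (hs : ∀ n : ℕ, X (n+1) = Matrix.mulVec !![E - g (k + n), -1; 1, 0] (X n) + F (n+1))
    (C L b : ℝ) (hC : 0 ≤ C) (hL : 0 ≤ L) (hb : 0 ≤ b)
    (hT : ∀ (n : ℕ) (k : ℤ), matNorm (transfer g E n k) ≤ C * Real.exp (L * n))
    (hF : ∀ i j, |F i j| ≤ b) (n : ℕ) (j : Fin 2) :
    |X n j| ≤ (n + 1) * (2 * C * Real.exp (L * n) * b) := by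
  rw [aux_duhamel g E k X F h0 hs n, Finset.sum_apply]
  refine (Finset.abs_sum_le_sum_abs _ _).trans ?_
  have : ∀ i ∈ Finset.range (n+1),
      |(Matrix.mulVec (transfer g E (n - i) (k + i)) (F i)) j| ≤ 2 * C * Real.exp (L * n) * b := by
    intro i hi
    have hT' : ∀ l, |transfer g E (n - i) (k + i) j l| ≤ C * Real.exp (L * n) := fun l =>
      (aux_entry _ j l).trans ((hT _ _).trans (by
        gcongr
        omega))
    rw [Matrix.mulVec, dotProduct, Fin.sum_univ_two]
    refine (abs_add_le _ _).trans ?_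
    rw [abs_mul, abs_mul]
    have e0 := mul_le_mul (hT' 0) (hF i 0) (abs_nonneg _) (by positivity)
    have e1 := mul_le_mul (hT' 1) (hF i 1) (abs_nonneg _) (by positivity)
    linarith
  refine (Finset.sum_le_sum this).trans ?_
  simp

/-- Wronskian bound. -/
theorem aux_wronsk (g : ℤ → ℝ) (E : ℝ) (u : ℤ → ℝ) (hu : IsEigenfunction g E u) (D : ℝ)
    (hD : ∀ s : Finset ℤ, ∑ i ∈ s, u i ^ 2 ≤ D ^ 2) (h0 : Tendsto u cofinite (nhds 0))
    (n : ℤ) (S : ℝ) (hS : ∀ m, |g (n - m) - g m| ≤ S) (m : ℤ) :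
    |u (m+1) * u (n - m) - u m * u (n - m - 1)| ≤ S * D ^ 2 := by
  have hS0 : 0 ≤ S := (abs_nonneg _).trans (hS 0)
  set W : ℤ → ℝ := fun m => u (m+1) * u (n - m) - u m * u (n - m - 1) with hW
  have hstep : ∀ m, |W m| ≤ |W (m-1)| + S * ((u m ^ 2 + u (n - m) ^ 2) / 2) := by
    intro m
    have e1 := hu m
    have e2 := hu (n - m)
    have : W m = W (m-1) + (g (n-m) - g m) * (u m * u (n-m)) := by
      simp only [hW]
      have a1 : m - 1 + 1 = m := by ring
      have a2 : n - (m - 1) = n - m + 1 := by ring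
      have a3 : n - m + 1 - 1 = n - m := by ring
      rw [a1, a2, a3]
      linear_combination u (n-m) * e1 - u m * e2
    rw [this]
    refine (abs_add_le _ _).trans ?_
    rw [abs_mul]
    gcongr
    · exact hS m
    · rw [abs_le]; constructor <;> nlinarith [sq_nonneg (u m - u (n-m)), sq_nonneg (u m + u (n-m))]
  have hsum : ∀ p : ℕ, |W m| ≤ |W (m - p)| +
      S * ((∑ i ∈ Finset.range p, u (m - i) ^ 2 + ∑ i ∈ Finset.range p, u (n - (m - i)) ^ 2) / 2) := by
    intro p
    induction p with
    | zero => simp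
    | succ p ih =>
      have := hstep (m - p)
      rw [Finset.sum_range_succ, Finset.sum_range_succ]
      push_cast
      rw [show m - ((p:ℤ) + 1) = m - p - 1 by ring]
      linarith
  have hb : ∀ p : ℕ, |W m| ≤ |W (m - p)| + S * D ^ 2 := by
    intro p
    refine (hsum p).trans ?_
    have b1 : ∑ i ∈ Finset.range p, u (m - i) ^ 2 ≤ D ^ 2 := by
      have hinj : Set.InjOn (fun i : ℕ => m - (i:ℤ)) (Finset.range p) := by
        intro a _ b _ h; simp only at h; omega
      have := hD ((Finset.range p).image (fun i : ℕ => m - (i:ℤ)))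
      rwa [Finset.sum_image hinj] at this
    have b2 : ∑ i ∈ Finset.range p, u (n - (m - i)) ^ 2 ≤ D ^ 2 := by
      have hinj : Set.InjOn (fun i : ℕ => n - (m - (i:ℤ))) (Finset.range p) := by
        intro a _ b _ h; simp only at h; omega
      have := hD ((Finset.range p).image (fun i : ℕ => n - (m - (i:ℤ))))
      rwa [Finset.sum_image hinj] at this
    gcongr
    linarith
  have hlim : ∀ f : ℕ → ℤ, Function.Injective f → Tendsto (fun p => u (f p)) atTop (nhds 0) := by
    intro f hf
    rw [← Nat.cofinite_eq_atTop]
    exact h0.comp hf.tendsto_cofinite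
  have l1 := hlim (fun p : ℕ => m - p + 1) (fun a b h => by simp only at h; omega)
  have l2 := hlim (fun p : ℕ => n - (m - p)) (fun a b h => by simp only at h; omega)
  have l3 := hlim (fun p : ℕ => m - p) (fun a b h => by simp only at h; omega)
  have l4 := hlim (fun p : ℕ => n - (m - p) - 1) (fun a b h => by simp only at h; omega)
  have lW : Tendsto (fun p : ℕ => |W (m - p)| + S * D ^ 2) atTop (nhds (|0 * 0 - 0 * 0| + S * D ^ 2)) :=
    ((l1.mul l2).sub (l3.mul l4)).abs.add_const _
  have := ge_of_tendsto' lW hb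
  simpa using this

theorem aux_init (g : ℤ → ℝ) (E M : ℝ) (hM : ∀ n, |g n| ≤ M) (u : ℤ → ℝ)
    (hu : IsEigenfunction g E u) (n : ℤ) (q : ℝ) (hq : 0 ≤ q)
    (hW : ∀ m, |u (m+1) * u (n - m) - u m * u (n - m - 1)| ≤ q ^ 2) :
    ∃ σ : ℝ, |σ| = 1 ∧ |u (n - (n/2 + 1)) - σ * u (n/2 + 1)| ≤ (|E| + M + 2) * q ∧
      |u (n - n/2) - σ * u (n/2)| ≤ (|E| + M + 2) * q := by
  have hM0 : 0 ≤ M := (abs_nonneg _).trans (hM 0)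
  have hE := abs_nonneg E
  have hor : ∀ a b : ℝ, |a * b| ≤ q ^ 2 → |a| ≤ q ∨ |b| ≤ q := by
    intro a b h
    by_contra! h'
    rw [abs_mul] at h
    nlinarith [h'.1, h'.2]
  have hq2 : q ≤ (|E| + M + 2) * q := by nlinarith
  have h := hW (n/2)
  rcases Int.even_or_odd' n with ⟨j, hj | hj⟩
  · have e : n / 2 = j := by omega
    simp only [e] at h ⊢
    rw [show n - j - 1 = j - 1 by omega, show n - j = j by omega] at h
    rw [show n - (j+1) = j - 1 by omega, show n - j = j by omega]
    rw [show u (j+1) * u j - u j * u (j-1) = u j * (u (j+1) - u (j-1)) by ring] at h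
    rcases hor _ _ h with h1 | h1
    · refine ⟨-1, by simp, ?_, ?_⟩
      · have : u (j-1) - -1 * u (j+1) = (E - g j) * u j := by linarith [hu j]
        rw [this, abs_mul]
        have hg : |E - g j| ≤ |E| + M := (abs_sub _ _).trans (by linarith [hM j])
        exact mul_le_mul (by linarith) h1 (abs_nonneg _) (by linarith)
      · rw [show u j - -1 * u j = 2 * u j by ring, abs_mul, abs_two]
        exact mul_le_mul (by linarith) h1 (abs_nonneg _) (by linarith)
    · refine ⟨1, by simp, ?_, ?_⟩
      · rw [one_mul, abs_sub_comm]; linarith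
      · simp; positivity
  · have e : n / 2 = j := by omega
    simp only [e] at h ⊢
    rw [show n - j - 1 = j by omega, show n - j = j + 1 by omega] at h
    rw [show n - (j+1) = j by omega, show n - j = j + 1 by omega]
    rw [show u (j+1) * u (j+1) - u j * u j = (u (j+1) - u j) * (u (j+1) + u j) by ring] at h
    rcases hor _ _ h with h1 | h1
    · exact ⟨1, by simp, by rw [one_mul, abs_sub_comm]; linarith, by rw [one_mul]; linarith⟩
    · refine ⟨-1, by simp, ?_, ?_⟩
      · rw [show u j - -1 * u (j+1) = u (j+1) + u j by ring]; linarith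
      · rw [show u (j+1) - -1 * u j = u (j+1) + u j by ring]; linarith

theorem aux_key (g : ℤ → ℝ) (E M : ℝ) (hM : ∀ n, |g n| ≤ M) (u : ℤ → ℝ)
    (hu : IsEigenfunction g E u) (D : ℝ) (hD0 : 0 ≤ D)
    (hD : ∀ s : Finset ℤ, ∑ i ∈ s, u i ^ 2 ≤ D ^ 2) (h0 : Tendsto u cofinite (nhds 0))
    (C L c : ℝ) (hC : 0 ≤ C) (hL : 0 ≤ L) (hc : 0 ≤ c)
    (hT : ∀ (n : ℕ) (k : ℤ), matNorm (transfer g E n k) ≤ C * Real.exp (L * n))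
    (n : ℤ) (hn : n ≠ 0) (hS : ∀ m, |g (n - m) - g m| ≤ Real.exp (-c * |(n:ℝ)|)) :
    |u 0| ≤ (|(n:ℝ)| / 2 + 2) * (2 * C * Real.exp (L * (|(n:ℝ)| / 2 + 1)) *
        ((|E| + M + 2) * (D * Real.exp (-c * |(n:ℝ)| / 2)))) + |u n| ∧
    |u (-1)| ≤ (|(n:ℝ)| / 2 + 2) * (2 * C * Real.exp (L * (|(n:ℝ)| / 2 + 1)) *
        ((|E| + M + 2) * (D * Real.exp (-c * |(n:ℝ)| / 2)))) + |u (n+1)| := by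
  have hM0 : 0 ≤ M := (abs_nonneg _).trans (hM 0)
  have hE := abs_nonneg E
  set s := Real.exp (-c * |(n:ℝ)| / 2) with hs
  have hs0 : 0 < s := Real.exp_pos _
  have hs1 : s ≤ 1 := Real.exp_le_one_iff.2 (by have := mul_nonneg hc (abs_nonneg (n:ℝ)); linarith)
  have hss : Real.exp (-c * |(n:ℝ)|) = s ^ 2 := by
    rw [hs, ← Real.exp_nat_mul]; congr 1; push_cast; ring
  rw [hss] at hS
  have hW := aux_wronsk g E u hu D hD h0 n _ hS
  obtain ⟨σ, hσ, i1, i2⟩ := aux_init g E M hM u hu n (D * s) (by positivity)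
    (fun m => (hW m).trans (by apply le_of_eq; ring))
  set b := (|E| + M + 2) * (D * s) with hb
  have hb0 : 0 ≤ b := by positivity
  have huD : ∀ m, |u m| ≤ D := fun m => by
    refine abs_le_of_sq_le_sq ?_ hD0
    simpa using hD {m}
  set k := n / 2 + 1 with hk
  let w : ℤ → ℝ := fun m => u (n - m) - σ * u m
  let X : ℕ → Fin 2 → ℝ := fun i => ![w (k + i), w (k + i - 1)]
  let F : ℕ → Fin 2 → ℝ := fun i => match i with
    | 0 => X 0
    | i + 1 => ![(g (k + i) - g (n - (k + i))) * u (n - (k + i)), 0]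
  have hX := aux_bound g E k X F rfl (by
    intro i
    ext j
    fin_cases j
    · have e1 := hu (k + i)
      have e2 := hu (n - (k + i))
      simp [X, F, w, Matrix.mulVec, dotProduct, Fin.sum_univ_two]
      rw [show n - (k + (i + 1 : ℤ)) = n - (k + i) - 1 by ring, show k + (i + 1 : ℤ) = k + i + 1 by ring,
        show n - (k + (i:ℤ) - 1) = n - (k + i) + 1 by ring]
      linear_combination e2 - σ * e1
    · simp [X, F, w, Matrix.mulVec, dotProduct, Fin.sum_univ_two]
      rw [show k + (i + 1 : ℤ) - 1 = k + i by ring]) C L b hC hL hb0 hT (by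
    intro i j
    cases i with
    | zero =>
      fin_cases j
      · simpa [F, X, w] using i1
      · simpa [F, X, w, hk] using i2
    | succ i =>
      fin_cases j
      · simp only [F, Fin.zero_eta, Matrix.cons_val_zero]
        rw [abs_mul, abs_sub_comm]
        calc _ ≤ s ^ 2 * D := mul_le_mul (hS _) (huD _) (abs_nonneg _) (by positivity)
          _ ≤ s * D := by gcongr; nlinarith
          _ ≤ b := by rw [hb]; nlinarith [mul_nonneg hD0 hs0.le]
      · simpa [F] using hb0)
  have fin : ∀ N : ℕ, (N : ℝ) ≤ |(n:ℝ)| / 2 + 1 → ∀ j, |X N j| ≤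
      (|(n:ℝ)| / 2 + 2) * (2 * C * Real.exp (L * (|(n:ℝ)| / 2 + 1)) * b) := by
    intro N hN j
    refine (hX N j).trans ?_
    refine mul_le_mul (by linarith) ?_ (by positivity) (by positivity)
    gcongr
  rcases lt_or_gt_of_ne hn with h | h
  · have hN : ((-k).toNat : ℤ) = -k := Int.toNat_of_nonneg (by omega)
    have hNb : (((-k).toNat : ℕ) : ℝ) ≤ |(n:ℝ)| / 2 + 1 := by
      have : 2 * ((-k).toNat : ℤ) ≤ |n| + 2 := by rw [abs_of_neg h]; omega
      have : 2 * (((-k).toNat : ℕ) : ℝ) ≤ |(n:ℝ)| + 2 := by exact_mod_cast this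
      linarith
    have f0 := fin _ hNb 0
    have f1 := fin _ hNb 1
    simp only [X, w, hN, Matrix.cons_val_zero, Matrix.cons_val_one] at f0 f1
    rw [show k + -k - 1 = -1 by ring, show n - -1 = n + 1 by ring] at f1
    rw [show k + -k = 0 by ring, sub_zero] at f0
    have g0 := abs_sub_abs_le_abs_sub (σ * u 0) (u n)
    have g1 := abs_sub_abs_le_abs_sub (σ * u (-1)) (u (n+1))
    rw [abs_mul, hσ, one_mul, abs_sub_comm] at g0 g1
    constructor <;> linarith
  · have hN : ((n + 1 - k).toNat : ℤ) = n + 1 - k := Int.toNat_of_nonneg (by omega)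
    have hNb : (((n + 1 - k).toNat : ℕ) : ℝ) ≤ |(n:ℝ)| / 2 + 1 := by
      have : 2 * ((n + 1 - k).toNat : ℤ) ≤ |n| + 2 := by rw [abs_of_pos h]; omega
      have : 2 * (((n + 1 - k).toNat : ℕ) : ℝ) ≤ |(n:ℝ)| + 2 := by exact_mod_cast this
      linarith
    have f0 := fin _ hNb 0
    have f1 := fin _ hNb 1
    simp only [X, w, hN, Matrix.cons_val_zero, Matrix.cons_val_one] at f0 f1
    rw [show k + (n + 1 - k) - 1 = n by ring, show n - n = 0 by ring] at f1
    rw [show k + (n + 1 - k) = n + 1 by ring, show n - (n + 1) = -1 by ring] at f0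
    have g0 := abs_sub_abs_le_abs_sub (u 0) (σ * u n)
    have g1 := abs_sub_abs_le_abs_sub (u (-1)) (σ * u (n+1))
    rw [abs_mul, hσ, one_mul] at g0 g1
    constructor <;> linarith

theorem aux_zero (g : ℤ → ℝ) (E : ℝ) (u : ℤ → ℝ) (hu : IsEigenfunction g E u)
    (h0 : u 0 = 0) (h1 : u (-1) = 0) (n : ℤ) : u n = 0 := by
  have : ∀ n : ℤ, u n = 0 ∧ u (n - 1) = 0 := by
    intro n
    induction n using Int.induction_on with
    | zero => exact ⟨h0, h1⟩
    | succ i ih =>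
      have := hu i
      rw [ih.1, ih.2] at this
      refine ⟨by linarith, by simpa using ih.1⟩
    | pred i ih =>
      have := hu (-i - 1)
      rw [ih.2, show (-(i:ℤ) - 1 + 1) = -i by ring, ih.1] at this
      exact ⟨ih.2, by linarith⟩
  exact (this n).1

theorem aux_freq (g : ℤ → ℝ) (M : ℝ) (hM : ∀ n, |g n| ≤ M) (c : ℝ) (hc : 0 < c)
    (h : c < deltaPot g) :
    ∃ᶠ n : ℤ in cofinite, n ≠ 0 ∧ ∀ m, |g (n - m) - g m| ≤ Real.exp (-c * |(n:ℝ)|) := by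
  have hM0 : 0 ≤ M := (abs_nonneg _).trans (hM 0)
  have hbd : ∀ n m : ℤ, |g (n - m) - g m| ≤ 2 * M + 1 := fun n m =>
    (abs_sub _ _).trans (by linarith [hM (n-m), hM m])
  have hbdd : ∀ n : ℤ, BddAbove (Set.range fun m : ℤ => |g (n - m) - g m|) := fun n =>
    ⟨_, by rintro _ ⟨m, rfl⟩; exact hbd n m⟩
  have hfr := frequently_lt_of_lt_limsup (hu := by
    refine IsBoundedUnder.isCoboundedUnder_le ⟨-Real.log (2 * M + 1), ?_⟩
    simp only [eventually_map]
    refine Eventually.of_forall fun n => ?_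
    have hl : 0 ≤ Real.log (2 * M + 1) := Real.log_nonneg (by linarith)
    rcases eq_or_ne n 0 with rfl | hn
    · simpa using hl
    have hn1 : (1:ℝ) ≤ |(n:ℝ)| := by exact_mod_cast Int.one_le_abs hn
    have hle : Real.log (⨆ m : ℤ, |g (n - m) - g m|) ≤ Real.log (2 * M + 1) := by
      have h1 : (⨆ m : ℤ, |g (n - m) - g m|) ≤ 2 * M + 1 := ciSup_le (hbd n)
      have h2 : 0 ≤ (⨆ m : ℤ, |g (n - m) - g m|) := Real.iSup_nonneg fun _ => abs_nonneg _
      rcases h2.eq_or_lt with h3 | h3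
      · rw [← h3]; simpa using hl
      · exact Real.log_le_log h3 h1
    show -Real.log (2 * M + 1) ≤ _
    rw [le_div_iff₀ (by linarith)]
    nlinarith) h
  refine hfr.mono fun n hn => ?_
  have hn0 : n ≠ 0 := by
    rintro rfl
    simp at hn; linarith
  refine ⟨hn0, fun m => (le_ciSup (hbdd n) m).trans ?_⟩
  have hn1 : (0:ℝ) < |(n:ℝ)| := by positivity
  rw [lt_div_iff₀ hn1] at hn
  have h2 : 0 ≤ (⨆ m : ℤ, |g (n - m) - g m|) := Real.iSup_nonneg fun _ => abs_nonneg _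
  rcases h2.eq_or_lt with h3 | h3
  · rw [← h3]; positivity
  · rw [← Real.log_le_iff_le_exp h3]; linarith

theorem aux_tend (a A C : ℝ) (ha : 0 < a) :
    Tendsto (fun n : ℤ => A * ((|(n:ℝ)| / 2 + C) * Real.exp (-a * |(n:ℝ)|))) cofinite (nhds 0) := by
  have h1 : Tendsto (fun n : ℤ => |(n:ℝ)|) cofinite atTop := by
    have := (tendsto_norm_cocompact_atTop (E := ℝ)).comp Int.tendsto_coe_cofinite
    simpa [Function.comp_def] using this
  have h2 : Tendsto (fun x : ℝ => A * ((x / 2 + C) * Real.exp (-a * x))) atTop (nhds 0) := by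
    have e1 : Tendsto (fun x : ℝ => x ^ 1 * Real.exp (-a * x)) atTop (nhds 0) := by
      have := tendsto_rpow_mul_exp_neg_mul_atTop_nhds_zero 1 a ha
      simpa using this
    have e0 : Tendsto (fun x : ℝ => Real.exp (-a * x)) atTop (nhds 0) := by
      have := tendsto_rpow_mul_exp_neg_mul_atTop_nhds_zero 0 a ha
      simpa using this
    have := ((e1.const_mul (1/2)).add (e0.const_mul C)).const_mul A
    simp only [mul_zero, add_zero] at this
    refine this.congr fun x => ?_
    ring
  exact h2.comp h1

theorem no_point_spectrum_above_Lyapunov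
    (g : ℤ → ℝ) (hg : ∃ M : ℝ, ∀ n : ℤ, |g n| ≤ M)
    (E : ℝ) (hδ : LyapSup g E < deltaPot g)
    (u : lp (fun _ : ℤ => ℝ) 2)
    (hu : IsEigenfunction g E (fun n => u n)) :
    u = 0 := by
  obtain ⟨M, hM⟩ := hg
  obtain ⟨L, hL1, hL2⟩ := exists_between hδ
  obtain ⟨c, hc1, hc2⟩ := exists_between hL2
  have hL0 : 0 ≤ L := (aux_Lnonneg g E M hM).trans hL1.le
  have hc0 : 0 < c := hL0.trans_lt hc1
  obtain ⟨C, hC, hT⟩ := aux_growth g E M hM L hL1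
  have hD : ∀ s : Finset ℤ, ∑ i ∈ s, u i ^ 2 ≤ ‖u‖ ^ 2 := by
    intro s
    have := lp.sum_rpow_le_norm_rpow (p := 2) (by norm_num) u s
    simpa using this
  have h0 : Tendsto (fun n : ℤ => u n) cofinite (nhds 0) := by
    have hs : Summable fun n : ℤ => (u n) ^ 2 := by
      have := (lp.memℓp u).summable (by norm_num)
      simpa using this
    have := hs.tendsto_cofinite_zero.sqrt
    simp only [Real.sqrt_sq_eq_abs, Real.sqrt_zero] at this
    exact (tendsto_zero_iff_abs_tendsto_zero _).2 this
  have hfr := aux_freq g M hM c hc0 hc2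
  have ht := aux_tend ((c - L)/2) (2 * C * Real.exp L * ((|E| + M + 2) * ‖u‖)) 2 (by linarith)
  have hη : Tendsto (fun n : ℤ => (|(n:ℝ)| / 2 + 2) * (2 * C * Real.exp (L * (|(n:ℝ)| / 2 + 1)) *
        ((|E| + M + 2) * (‖u‖ * Real.exp (-c * |(n:ℝ)| / 2))))) cofinite (nhds 0) := by
    refine ht.congr fun n => ?_
    have : Real.exp (-((c - L)/2) * |(n:ℝ)|) * Real.exp L =
        Real.exp (L * (|(n:ℝ)| / 2 + 1)) * Real.exp (-c * |(n:ℝ)| / 2) := by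
      rw [← Real.exp_add, ← Real.exp_add]; congr 1; ring
    linear_combination (2 * C * ((|E| + M + 2) * ‖u‖) * (|(n:ℝ)| / 2 + 2)) * this
  have h0' : Tendsto (fun n : ℤ => u (n + 1)) cofinite (nhds 0) :=
    h0.comp (add_left_injective (1:ℤ)).tendsto_cofinite
  have k0 := hη.add h0.abs
  have k1 := hη.add h0'.abs
  simp only [abs_zero, add_zero] at k0 k1
  have key := fun n hn hS => aux_key g E M hM (fun n => u n) hu ‖u‖ (norm_nonneg _) hD h0 C L c hC hL0
    hc0.le hT n hn hS
  have z0 : |u 0| ≤ 0 := by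
    refine le_of_forall_pos_le_add fun ε hε => ?_
    obtain ⟨n, ⟨hn, hS⟩, h⟩ := (hfr.and_eventually (k0.eventually (gt_mem_nhds hε))).exists
    have := (key n hn hS).1
    simp only at this
    linarith
  have z1 : |u (-1)| ≤ 0 := by
    refine le_of_forall_pos_le_add fun ε hε => ?_
    obtain ⟨n, ⟨hn, hS⟩, h⟩ := (hfr.and_eventually (k1.eventually (gt_mem_nhds hε))).exists
    have := (key n hn hS).2
    simp only at this
    linarith
  ext n
  exact aux_zero g E (fun n => u n) hu (abs_nonpos_iff.1 z0) (abs_nonpos_iff.1 z1) n
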